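/- There is an absolute constant c > 0 such that for every integer t ≥ 1, every graph G with no K_t minor, and every ball hypergraph 𝓗 of G, the fractional matching number satisfies ν*(𝓗) ≤ c·t·√(log t)·ν(𝓗). -/

import Mathlib

/-- The ball of radius `r` centered at `v` in the graph metric of `G`:
all vertices `u` with `d_G(v,u) ≤ r` (in particular, `u` must be reachable from `v`). -/
def SimpleGraph.gBall {V : Type*} (G : SimpleGraph V) (v : V) (r : ℕ) : Set V :=
  {u | G.Reachable v u ∧ G.dist v u ≤ r}

/-- A ball hypergraph of `G` is given by its edge set `E`: a collection of subsets of
`V(G)`, each of which is a ball of `G`. -/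
def IsBallHypergraph {V : Type*} (G : SimpleGraph V) (E : Set (Set V)) : Prop :=
  ∀ e ∈ E, ∃ v r, e = G.gBall v r

/-- `H` is a minor of `G`: there are pairwise disjoint connected nonempty branch sets
in `G`, one for each vertex of `H`, with an edge of `G` between the branch sets of any
two adjacent vertices of `H`. -/
def GraphMinor {W : Type*} {V : Type*} (H : SimpleGraph W) (G : SimpleGraph V) : Prop :=
  ∃ f : W → Set V,
    (∀ w, (G.induce (f w)).Connected) ∧
    (Pairwise fun w₁ w₂ => Disjoint (f w₁) (f w₂)) ∧
    (∀ w₁ w₂, H.Adj w₁ w₂ → ∃ u ∈ f w₁, ∃ v ∈ f w₂, G.Adj u v)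

/-- The matching number of the hypergraph with edge set `E`: the maximum number of
pairwise disjoint edges. -/
noncomputable def matchingNumber {V : Type*} [Fintype V] (E : Set (Set V)) : ℕ :=
  sSup {n | ∃ M : Finset (Set V), ↑M ⊆ E ∧ (M : Set (Set V)).Pairwise Disjoint ∧ M.card = n}

/-- The transversal number of the hypergraph with edge set `E`: the minimum size of a
set of vertices meeting every edge. -/
noncomputable def transversalNumber {V : Type*} [Fintype V] (E : Set (Set V)) : ℕ :=
  sInf {n | ∃ T : Finset V, (∀ e ∈ E, ∃ v ∈ T, v ∈ e) ∧ T.card = n}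


/-- `w` is a fractional matching of the hypergraph with edge set `E`: nonnegative
weights on the edges (zero outside `E`) such that for every vertex, the total weight
of the edges containing it is at most `1`. -/
def IsFractionalMatching {V : Type*} [Fintype V] (E : Set (Set V)) (w : Set V → ℝ) :
    Prop :=
  (∀ e, 0 ≤ w e) ∧ (∀ e, e ∉ E → w e = 0) ∧
    ∀ v : V, ∑ e : Set V, Set.indicator {e : Set V | v ∈ e} w e ≤ 1

section CliqueMinorFreeBalls
open Finset

theorem SimpleGraph.induce_connected_of_reflTransGen {V : Type*} {G : SimpleGraph V} {s : Set V}
    {u : V} (hu : u ∈ s)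
    (h : ∀ v ∈ s, Relation.ReflTransGen (fun a b => G.Adj a b ∧ b ∈ s) u v) :
    (G.induce s).Connected := by
  have key : ∀ v, Relation.ReflTransGen (fun a b => G.Adj a b ∧ b ∈ s) u v →
      ∃ hv : v ∈ s, (G.induce s).Reachable ⟨u, hu⟩ ⟨v, hv⟩ := by
    intro v hv
    induction hv with
    | refl => exact ⟨hu, SimpleGraph.Reachable.refl _⟩
    | tail _ hbc ih =>
      obtain ⟨hb, hr⟩ := ih
      exact ⟨hbc.2, hr.trans (SimpleGraph.Adj.reachable (by simpa using hbc.1))⟩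
  rw [SimpleGraph.connected_iff_exists_forall_reachable]
  exact ⟨⟨u, hu⟩, fun v => (key v.1 (h v.1 v.2)).2⟩

theorem SimpleGraph.Connected.reflTransGen_of_induce {V : Type*} {G : SimpleGraph V} {s : Set V}
    (h : (G.induce s).Connected) {u v : V} (hu : u ∈ s) (hv : v ∈ s) :
    Relation.ReflTransGen (fun a b => G.Adj a b ∧ b ∈ s) u v := by
  have hr := h.preconnected ⟨u, hu⟩ ⟨v, hv⟩
  rw [SimpleGraph.reachable_iff_reflTransGen] at hr
  exact hr.lift (fun x : s => x.1) (fun a b hab => ⟨by simpa using hab, b.2⟩)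

theorem GraphMinor.trans {X W V : Type*} {K : SimpleGraph X} {H : SimpleGraph W}
    {G : SimpleGraph V} (hKH : GraphMinor K H) (hHG : GraphMinor H G) : GraphMinor K G := by
  obtain ⟨g, gconn, gdisj, gadj⟩ := hKH
  obtain ⟨f, fconn, fdisj, fadj⟩ := hHG
  refine ⟨fun x => ⋃ w ∈ g x, f w, fun x => ?_, fun x y hxy => ?_, fun x y hxy => ?_⟩
  · obtain ⟨w₀, hw₀⟩ := (gconn x).nonempty
    obtain ⟨u₀, hu₀⟩ := (fconn w₀).nonempty
    have mono : ∀ w ∈ g x, ∀ a b, Relation.ReflTransGen (fun a b => G.Adj a b ∧ b ∈ f w) a b →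
        Relation.ReflTransGen (fun a b => G.Adj a b ∧ b ∈ ⋃ w ∈ g x, f w) a b := by
      intro w hw a b hab
      exact hab.lift id fun c d hcd => ⟨hcd.1, Set.mem_biUnion hw hcd.2⟩
    have key : ∀ w, Relation.ReflTransGen (fun a b => H.Adj a b ∧ b ∈ g x) w₀ w →
        w ∈ g x ∧ ∀ v ∈ f w,
          Relation.ReflTransGen (fun a b => G.Adj a b ∧ b ∈ ⋃ w ∈ g x, f w) u₀ v := by
      intro w hw
      induction hw with
      | refl =>
        exact ⟨hw₀, fun v hv => mono w₀ hw₀ _ _ ((fconn w₀).reflTransGen_of_induce hu₀ hv)⟩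
      | tail _ hbc ih =>
        refine ⟨hbc.2, fun v hv => ?_⟩
        obtain ⟨a, ha, b, hb, hab⟩ := fadj _ _ hbc.1
        refine ((ih.2 a ha).tail ⟨hab, Set.mem_biUnion hbc.2 hb⟩).trans ?_
        exact mono _ hbc.2 _ _ ((fconn _).reflTransGen_of_induce hb hv)
    refine SimpleGraph.induce_connected_of_reflTransGen (u := u₀) (Set.mem_biUnion hw₀ hu₀) ?_
    intro v hv
    simp only [Set.mem_iUnion] at hv
    obtain ⟨w, hw, hv⟩ := hv
    exact (key w ((gconn x).reflTransGen_of_induce hw₀ hw)).2 v hv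
  · simp only [Set.disjoint_iUnion_left, Set.disjoint_iUnion_right]
    intro w hw w' hw'
    refine fdisj ?_
    rintro rfl
    exact Set.disjoint_left.1 (gdisj hxy) hw' hw
  · obtain ⟨w, hw, w', hw', hadj⟩ := gadj x y hxy
    obtain ⟨a, ha, b, hb, hab⟩ := fadj _ _ hadj
    exact ⟨a, Set.mem_biUnion hw ha, b, Set.mem_biUnion hw' hb, hab⟩

theorem GraphMinor.induce {V : Type*} (G : SimpleGraph V) (s : Set V) :
    GraphMinor (G.induce s) G := by
  refine ⟨fun x => {x.1}, fun x => ?_, fun x y hxy => ?_, fun x y hxy => ?_⟩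
  · exact SimpleGraph.induce_connected_of_reflTransGen (u := x.1) rfl
      fun v hv => by rw [Set.mem_singleton_iff.1 hv]
  · simpa [Subtype.ext_iff] using fun h => hxy (Subtype.ext h)
  · exact ⟨x, rfl, y, rfl, hxy⟩

/-- The graph obtained from `G` by contracting the edge `uv` onto `u`. -/
def SimpleGraph.contractOnto {V : Type*} (G : SimpleGraph V) (u v : V) :
    SimpleGraph {x // x ≠ v} where
  Adj x y := x ≠ y ∧ (G.Adj x y ∨ (x = u ∧ G.Adj v y) ∨ (y = u ∧ G.Adj v x))
  symm := ⟨fun x y h => ⟨h.1.symm, by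
    rcases h.2 with h | h | h
    · exact Or.inl h.symm
    · exact Or.inr (Or.inr h)
    · exact Or.inr (Or.inl h)⟩⟩
  loopless := ⟨fun x h => h.1 rfl⟩

theorem GraphMinor.contractOnto {V : Type*} {G : SimpleGraph V} {u v : V} (huv : G.Adj u v) :
    GraphMinor (G.contractOnto u v) G := by
  refine ⟨fun x => {z | z = x ∨ (x = u ∧ z = v)}, fun x => ?_, fun x y hxy => ?_,
    fun x y hxy => ?_⟩
  · refine SimpleGraph.induce_connected_of_reflTransGen (u := x.1) (Or.inl rfl) ?_
    rintro z (rfl | ⟨hx, rfl⟩)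
    · exact Relation.ReflTransGen.refl
    · exact Relation.ReflTransGen.single ⟨hx ▸ huv, Or.inr ⟨hx, rfl⟩⟩
  · refine Set.disjoint_left.2 ?_
    have hne : x.1 ≠ y.1 := fun h => hxy (Subtype.ext h)
    rintro z (rfl | ⟨hx, rfl⟩) (h | ⟨hy, h⟩)
    · exact hne h
    · exact x.2 h
    · exact y.2 h.symm
    · exact hne (hx.trans hy.symm)
  · rcases hxy.2 with h | ⟨hx, h⟩ | ⟨hy, h⟩
    · exact ⟨x, Or.inl rfl, y, Or.inl rfl, h⟩
    · exact ⟨v, Or.inr ⟨hx, rfl⟩, y, Or.inl rfl, h⟩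
    · exact ⟨x, Or.inl rfl, v, Or.inr ⟨hy, rfl⟩, h.symm⟩

section EdgeDensity
open Classical

/-- The number of ordered pairs of adjacent vertices. -/
noncomputable def SimpleGraph.adjCount {V : Type*} [Fintype V] (G : SimpleGraph V) : ℕ :=
  ∑ x, ∑ y, if G.Adj x y then 1 else 0

theorem SimpleGraph.sum_adj_eq_degree {V : Type*} [Fintype V] (G : SimpleGraph V) (x : V) :
    (∑ y, if G.Adj x y then 1 else 0) = G.degree x := by
  rw [← Finset.card_filter, ← SimpleGraph.card_neighborFinset_eq_degree]
  congr 1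
  ext y
  simp

theorem SimpleGraph.adjCount_eq_sum_degree {V : Type*} [Fintype V] (G : SimpleGraph V) :
    G.adjCount = ∑ x, G.degree x :=
  Finset.sum_congr rfl fun x _ => G.sum_adj_eq_degree x

theorem SimpleGraph.adjCount_eq_induce_add {V : Type*} [Fintype V] (G : SimpleGraph V) (v : V) :
    G.adjCount = (G.induce {x | x ≠ v}).adjCount + 2 * G.degree v := by
  have hrow : ∀ x, (∑ y, if G.Adj x y then 1 else 0) = (if G.Adj x v then 1 else 0) +
      ∑ y : {y // y ≠ v}, if G.Adj x y then 1 else 0 := fun x =>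
    Fintype.sum_eq_add_sum_subtype_ne (fun y => if G.Adj x y then 1 else 0) v
  have hcol : (∑ x : {x // x ≠ v}, if G.Adj x v then 1 else 0) = G.degree v := by
    rw [← G.sum_adj_eq_degree v,
      Fintype.sum_eq_add_sum_subtype_ne (fun y => if G.Adj v y then 1 else 0) v]
    simp [G.adj_comm v]
  have hind : (∑ x : {x // x ≠ v}, ∑ y : {y // y ≠ v}, if G.Adj x y then 1 else 0) =
      (G.induce {x | x ≠ v}).adjCount := rfl
  rw [SimpleGraph.adjCount, Fintype.sum_eq_add_sum_subtype_ne _ v, G.sum_adj_eq_degree v,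
    Finset.sum_congr rfl (fun x _ => hrow x.1), Finset.sum_add_distrib, hcol, hind]
  ring

theorem SimpleGraph.adjCount_le_contractOnto {V : Type*} [Fintype V] {G : SimpleGraph V}
    {u v : V} (huv : G.Adj u v) :
    G.adjCount ≤ (G.contractOnto u v).adjCount + 2 +
      2 * (G.neighborFinset u ∩ G.neighborFinset v).card := by
  have huv' : u ≠ v := huv.ne
  let P : V → Prop := fun y => G.Adj v y ∧ ¬ G.Adj u y ∧ y ≠ u
  have hle : (G.induce {x | x ≠ v}).adjCount + 2 * (∑ y : {y // y ≠ v}, if P y then 1 else 0) ≤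
      (G.contractOnto u v).adjCount := by
    have hone : ∀ y : {y // y ≠ v}, (∑ x : {x // x ≠ v}, if x.1 = u ∧ P y then 1 else 0) =
        if P y then 1 else 0 := by
      intro y
      rw [Finset.sum_eq_single (⟨u, huv'⟩ : {x // x ≠ v})]
      · simp
      · intro b _ hb
        rw [if_neg]
        exact fun h => hb (Subtype.ext h.1)
      · simp
    have h1 : (∑ x : {x // x ≠ v}, ∑ y : {y // y ≠ v}, if x.1 = u ∧ P y then 1 else 0) =
        ∑ y : {y // y ≠ v}, if P y then 1 else 0 := by
      rw [Finset.sum_comm]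
      exact Finset.sum_congr rfl fun y _ => hone y
    have h2 : (∑ x : {x // x ≠ v}, ∑ y : {y // y ≠ v}, if y.1 = u ∧ P x then 1 else 0) =
        ∑ y : {y // y ≠ v}, if P y then 1 else 0 :=
      Finset.sum_congr rfl fun y _ => hone y
    have hind : (G.induce {x | x ≠ v}).adjCount =
      (∑ x : {x // x ≠ v}, ∑ y : {y // y ≠ v}, if G.Adj x y then 1 else 0) := rfl
    rw [two_mul, hind]
    nth_rw 1 [← h1]
    rw [← h2, ← Finset.sum_add_distrib, ← Finset.sum_add_distrib]
    refine Finset.sum_le_sum fun x _ => ?_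
    rw [← Finset.sum_add_distrib, ← Finset.sum_add_distrib]
    refine Finset.sum_le_sum fun y _ => ?_
    have hne : ∀ {a b : V}, a ≠ b → x.1 = a → y.1 = b → x ≠ y := by
      rintro a b hab rfl rfl rfl
      exact hab rfl
    have hA : G.Adj x y → (G.contractOnto u v).Adj x y := fun h => ⟨hne h.ne rfl rfl, Or.inl h⟩
    have hB : x.1 = u ∧ P y → (G.contractOnto u v).Adj x y := fun h =>
      ⟨hne h.2.2.2.symm h.1 rfl, Or.inr (Or.inl ⟨h.1, h.2.1⟩)⟩
    have hC : y.1 = u ∧ P x → (G.contractOnto u v).Adj x y := fun h =>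
      ⟨hne h.2.2.2 rfl h.1, Or.inr (Or.inr ⟨h.1, h.2.1⟩)⟩
    have hAB : x.1 = u ∧ P y → ¬ G.Adj x y := fun h h' => h.2.2.1 (h.1 ▸ h')
    have hAC : y.1 = u ∧ P x → ¬ G.Adj x y := fun h h' => h.2.2.1 (h.1 ▸ h'.symm)
    have hBC : x.1 = u ∧ P y → ¬ (y.1 = u ∧ P x) := fun h h' => h.2.2.2 h'.1
    by_cases h : (G.contractOnto u v).Adj x y
    · rw [if_pos h]
      by_cases h2 : x.1 = u ∧ P y
      · simp [if_neg (hAB h2), if_pos h2, if_neg (hBC h2)]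
      · by_cases h3 : y.1 = u ∧ P x
        · simp [if_neg (hAC h3), if_neg h2, if_pos h3]
        · rw [if_neg h2, if_neg h3]
          split_ifs <;> omega
    · rw [if_neg (mt hA h), if_neg (mt hB h), if_neg (mt hC h)]
      omega
  have hdeg : G.degree v ≤ (∑ y : {y // y ≠ v}, if P y then 1 else 0) + 1 +
      (G.neighborFinset u ∩ G.neighborFinset v).card := by
    have h1 : (∑ y : {y // y ≠ v}, if P y then 1 else 0) = (univ.filter P).card := by
      rw [Finset.card_filter, Fintype.sum_eq_add_sum_subtype_ne (fun y => if P y then 1 else 0) v]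
      have : ¬ P v := fun h => h.1.ne rfl
      simp [this]
    rw [h1, ← SimpleGraph.card_neighborFinset_eq_degree]
    have hsub : G.neighborFinset v ⊆
        (univ.filter P ∪ {u}) ∪ (G.neighborFinset u ∩ G.neighborFinset v) := by
      intro y hy
      simp only [SimpleGraph.mem_neighborFinset] at hy
      simp only [Finset.mem_union, Finset.mem_filter, Finset.mem_univ, true_and,
        Finset.mem_singleton, Finset.mem_inter, SimpleGraph.mem_neighborFinset, P]
      tauto
    calc _ ≤ _ := Finset.card_le_card hsub
      _ ≤ _ := Finset.card_union_le _ _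
      _ ≤ _ := by
        gcongr
        exact (Finset.card_union_le _ _).trans (by simp)
  have := G.adjCount_eq_induce_add v
  omega

/-- A dense graph contracts to a graph with a vertex whose neighbourhood induces a graph on at
least `k` vertices in which every degree is about half of the number of vertices. -/
theorem exists_minor_with_dense_neighborhood {k : ℕ} (hk : 1 ≤ k) (n : ℕ) :
    ∀ (V : Type) [Fintype V] (G : SimpleGraph V), Fintype.card V = n → 1 ≤ n →
      2 * k * n ≤ G.adjCount →
      ∃ (W : Type) (_ : Fintype W) (H : SimpleGraph W) (M : Finset W), GraphMinor H G ∧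
        k ≤ M.card ∧ ∀ x ∈ M, M.card ≤ 2 * (H.neighborFinset x ∩ M).card + 2 := by
  induction n with
  | zero => intro _ _ _ _ h; omega
  | succ n ih =>
    intro V _ G hcard _ hdens
    have hsub : ∀ v : V, Fintype.card {x // x ≠ v} = n := by
      intro v
      have := Fintype.sum_eq_add_sum_subtype_ne (fun _ => 1) v
      simp only [Finset.sum_const, Finset.card_univ, hcard, smul_eq_mul, mul_one] at this
      omega
    have hn : 1 ≤ n := by
      by_contra hn
      have hn : n = 0 := by omega
      subst hn
      have hz : G.adjCount = 0 := by
        have : Subsingleton V := Fintype.card_le_one_iff_subsingleton.1 (by omega)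
        unfold SimpleGraph.adjCount
        refine Finset.sum_eq_zero fun x _ => Finset.sum_eq_zero fun y _ => ?_
        rw [if_neg]
        exact fun h => h.ne (Subsingleton.elim _ _)
      omega
    have step : ∀ (v : V) (G' : SimpleGraph {x // x ≠ v}), GraphMinor G' G → ∀ l : ℕ,
        G.adjCount ≤ G'.adjCount + 2 * l → 2 * l * (n + 1) ≤ G.adjCount →
        2 * k * n ≤ G'.adjCount := by
      intro v G' _ l h1 h2
      by_contra hlt
      push Not at hlt
      have hkl : k ≤ l ∨ l < k := le_or_gt _ _
      rcases hkl with hkl | hkl <;> nlinarith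
    by_cases hdel : ∃ v, 2 * G.degree v * (n + 1) ≤ G.adjCount
    · obtain ⟨v, hv⟩ := hdel
      have hm : GraphMinor (G.induce {x | x ≠ v}) G := GraphMinor.induce G _
      obtain ⟨W, fW, H, M, hH, h1, h2⟩ := ih {x // x ≠ v} (G.induce {x | x ≠ v}) (hsub v) hn
        (step v _ hm _ (G.adjCount_eq_induce_add v).le hv)
      exact ⟨W, fW, H, M, hH.trans hm, h1, h2⟩
    by_cases hcon : ∃ u v, G.Adj u v ∧
        2 * ((G.neighborFinset u ∩ G.neighborFinset v).card + 1) * (n + 1) ≤ G.adjCount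
    · obtain ⟨u, v, huv, hv⟩ := hcon
      have hm := GraphMinor.contractOnto huv
      obtain ⟨W, fW, H, M, hH, h1, h2⟩ := ih {x // x ≠ v} (G.contractOnto u v) (hsub v) hn
        (step v _ hm _ (by have := SimpleGraph.adjCount_le_contractOnto huv; omega) hv)
      exact ⟨W, fW, H, M, hH.trans hm, h1, h2⟩
    push Not at hdel hcon
    obtain ⟨v, hv⟩ : ∃ v, G.degree v * (n + 1) ≤ G.adjCount := by
      by_contra hno
      push Not at hno
      have : Nonempty V := Fintype.card_pos_iff.1 (by omega)
      have h1 : ∑ v : V, G.adjCount < ∑ v : V, G.degree v * (n + 1) :=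
        Finset.sum_lt_sum_of_nonempty Finset.univ_nonempty fun v _ => hno v
      rw [← Finset.sum_mul, ← SimpleGraph.adjCount_eq_sum_degree] at h1
      simp only [Finset.sum_const, Finset.card_univ, hcard, smul_eq_mul] at h1
      rw [mul_comm] at h1
      exact lt_irrefl _ h1
    refine ⟨V, inferInstance, G, G.neighborFinset v, ?_, ?_, ?_⟩
    · refine ⟨fun x => {x}, fun x => ?_, fun x y hxy => ?_, fun x y hxy => ?_⟩
      · exact SimpleGraph.induce_connected_of_reflTransGen (u := x) rfl
          fun v hv => by rw [Set.mem_singleton_iff.1 hv]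
      · simpa using hxy
      · exact ⟨x, rfl, y, rfl, hxy⟩
    · rw [SimpleGraph.card_neighborFinset_eq_degree]
      have := hdel v
      by_contra hlt
      push Not at hlt
      nlinarith
    · intro x hx
      rw [SimpleGraph.card_neighborFinset_eq_degree]
      have hadj : G.Adj x v := by simpa using ((G.mem_neighborFinset _ _).1 hx).symm
      have := hcon x v hadj
      have h3 : G.degree v * (n + 1) <
        2 * ((G.neighborFinset x ∩ G.neighborFinset v).card + 1) * (n + 1) := by omega
      have := lt_of_mul_lt_mul_right h3 (by omega)
      omega

end EdgeDensity

section DenseCliqueMinor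
open Classical

theorem exists_dominating_tuple {W ι : Type*} (D : SimpleGraph W) {Z U : Finset W}
    (hZ : Z.Nonempty) (hU : U.Nonempty) (s : ℕ)
    (hdeg : ∀ u ∈ U, Z.card ≤ 4 * (Z.filter (D.Adj u)).card) (I : Finset ι) (A : ι → Finset W)
    {θ : ℝ} (hA : ∀ i ∈ I, ((Z ∩ A i).card : ℝ) ≤ θ * Z.card) (hθ : I.card * θ ^ s < 1 / 2) :
    ∃ b : Fin s → W, (∀ j, b j ∈ Z) ∧ (∀ i ∈ I, ∃ j, b j ∉ A i) ∧
      ((U.filter fun u => ∀ j, ¬ D.Adj u (b j)).card : ℝ) ≤ 2 * (3 / 4) ^ s * U.card := by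
  let Ω : Finset (Fin s → W) := Fintype.piFinset fun _ => Z
  have hZ0 : (0 : ℝ) < Z.card := by exact_mod_cast hZ.card_pos
  have hU0 : (0 : ℝ) < U.card := by exact_mod_cast hU.card_pos
  set q : ℝ := (3 / 4) ^ s with hq
  have hq0 : 0 < q := by positivity
  have hΩ : (Ω.card : ℝ) = (Z.card : ℝ) ^ s := by
    simp only [Ω, Fintype.card_piFinset_const]
    push_cast
    rfl
  have hbad : ∑ b ∈ Ω, ∑ i ∈ I, (if ∀ j, b j ∈ A i then (1 : ℝ) else 0) ≤
      I.card * θ ^ s * Ω.card := by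
    rw [Finset.sum_comm]
    have : ∀ i ∈ I, ∑ b ∈ Ω, (if ∀ j, b j ∈ A i then (1 : ℝ) else 0) ≤ θ ^ s * Ω.card := by
      intro i hi
      have h1 : Ω.filter (fun b => ∀ j, b j ∈ A i) = Fintype.piFinset fun _ => Z ∩ A i := by
        ext b
        simp [Ω, Fintype.mem_piFinset, forall_and]
      rw [← Finset.sum_filter, h1, Finset.sum_const, Fintype.card_piFinset_const, nsmul_one, hΩ,
        ← mul_pow]
      push_cast
      exact pow_le_pow_left₀ (by positivity) (hA i hi) s
    calc _ ≤ ∑ i ∈ I, θ ^ s * (Ω.card : ℝ) := Finset.sum_le_sum this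
      _ = _ := by rw [Finset.sum_const, nsmul_eq_mul]; ring
  have hund : ∑ b ∈ Ω, ((U.filter fun u => ∀ j, ¬ D.Adj u (b j)).card : ℝ) ≤
      U.card * q * Ω.card := by
    have h0 : ∀ b : Fin s → W, ((U.filter fun u => ∀ j, ¬ D.Adj u (b j)).card : ℝ) =
        ∑ u ∈ U, if ∀ j, ¬ D.Adj u (b j) then (1 : ℝ) else 0 := by
      intro b
      rw [← Finset.sum_filter, Finset.sum_const, nsmul_one]
    simp only [h0]
    rw [Finset.sum_comm]
    have : ∀ u ∈ U, ∑ b ∈ Ω, (if ∀ j, ¬ D.Adj u (b j) then (1 : ℝ) else 0) ≤ q * Ω.card := by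
      intro u hu
      have h1 : Ω.filter (fun b => ∀ j, ¬ D.Adj u (b j)) =
          Fintype.piFinset fun _ => Z.filter fun z => ¬ D.Adj u z := by
        ext b
        simp [Ω, Fintype.mem_piFinset, forall_and]
      have h2 : ((Z.filter fun z => ¬ D.Adj u z).card : ℝ) ≤ 3 / 4 * Z.card := by
        have h3 := Finset.card_filter_add_card_filter_not (s := Z) (D.Adj u)
        have h4 := hdeg u hu
        have h5 : 4 * (Z.filter fun z => ¬ D.Adj u z).card ≤ 3 * Z.card := by omega
        have h6 : (4 : ℝ) * (Z.filter fun z => ¬ D.Adj u z).card ≤ 3 * Z.card := by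
          exact_mod_cast h5
        linarith
      rw [← Finset.sum_filter, h1, Finset.sum_const, Fintype.card_piFinset_const, nsmul_one, hΩ,
        hq, ← mul_pow]
      push_cast
      exact pow_le_pow_left₀ (by positivity) h2 s
    calc _ ≤ ∑ u ∈ U, q * (Ω.card : ℝ) := Finset.sum_le_sum this
      _ = _ := by rw [Finset.sum_const, nsmul_eq_mul]; ring
  have hΩ0 : (0 : ℝ) < Ω.card := by rw [hΩ]; positivity
  obtain ⟨b, hb, hlt⟩ : ∃ b ∈ Ω,
      2 * q * U.card * ∑ i ∈ I, (if ∀ j, b j ∈ A i then (1 : ℝ) else 0) +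
        ((U.filter fun u => ∀ j, ¬ D.Adj u (b j)).card : ℝ) < 2 * q * U.card := by
    refine Finset.exists_lt_of_sum_lt ?_
    rw [Finset.sum_add_distrib, ← Finset.mul_sum, Finset.sum_const, nsmul_eq_mul]
    have h1 : 2 * q * U.card * (I.card * θ ^ s * Ω.card) < 2 * q * U.card * (1 / 2 * Ω.card) := by
      gcongr
    have h2 := mul_le_mul_of_nonneg_left hbad (show 0 ≤ 2 * q * U.card by positivity)
    linarith
  refine ⟨b, fun j => Fintype.mem_piFinset.1 hb j, fun i hi => ?_, ?_⟩
  · by_contra hno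
    push Not at hno
    have h1 : (1 : ℝ) ≤ ∑ i ∈ I, (if ∀ j, b j ∈ A i then (1 : ℝ) else 0) := by
      refine le_trans ?_ (Finset.single_le_sum (fun i _ => ?_) hi)
      · rw [if_pos hno]
      · split_ifs <;> norm_num
    have h2 := mul_le_mul_of_nonneg_left h1 (show 0 ≤ 2 * q * U.card by positivity)
    have h3 : (0 : ℝ) ≤ (U.filter fun u => ∀ j, ¬ D.Adj u (b j)).card := by positivity
    linarith
  · have h1 : (0 : ℝ) ≤ ∑ i ∈ I, (if ∀ j, b j ∈ A i then (1 : ℝ) else 0) :=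
      Finset.sum_nonneg fun i _ => by split_ifs <;> norm_num
    have h2 := mul_nonneg (show 0 ≤ 2 * q * U.card by positivity) h1
    linarith

theorem card_mul_pow_lt_half {r t j : ℕ} (hr : 4 ≤ r) (ht : t ≤ 2 ^ r ^ 2) (hj : j ≤ t) :
    (j : ℝ) * (4 * (3 / 4) ^ (3 * r)) ^ (3 * r) < 1 / 2 := by
  obtain ⟨d, rfl⟩ : ∃ d, r = d + 2 := ⟨r - 2, by omega⟩
  have h1 : (4 : ℝ) * (3 / 4) ^ (3 * (d + 2)) ≤ (1 / 2) ^ d := by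
    rw [pow_mul]
    have : ((3 / 4 : ℝ) ^ 3) ^ (d + 2) ≤ (1 / 2) ^ (d + 2) := by
      gcongr
      norm_num
    calc _ ≤ 4 * (1 / 2 : ℝ) ^ (d + 2) := by gcongr
      _ = _ := by ring
  have h2 : (j : ℝ) ≤ 2 ^ (d + 2) ^ 2 := by exact_mod_cast hj.trans ht
  calc (j : ℝ) * (4 * (3 / 4) ^ (3 * (d + 2))) ^ (3 * (d + 2))
      ≤ 2 ^ (d + 2) ^ 2 * ((1 / 2) ^ d) ^ (3 * (d + 2)) := by gcongr
    _ ≤ 2 ^ (d + 2) ^ 2 * (1 / 2) ^ ((d + 2) ^ 2 + 2) := by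
      rw [← pow_mul]
      refine mul_le_mul_of_nonneg_left ?_ (by positivity)
      refine pow_le_pow_of_le_one (by norm_num) (by norm_num) ?_
      nlinarith
    _ = 1 / 4 := by
      rw [pow_add, ← mul_assoc, ← mul_pow]
      norm_num
    _ < 1 / 2 := by norm_num

/-- Any two vertices of `U` outside a set of at most `L` vertices are joined by a path with at most
two interior vertices avoiding that set. -/
def ShortLinked {W : Type*} (D : SimpleGraph W) (U : Finset W) (L : ℕ) : Prop :=
  ∀ X : Finset W, X.card ≤ L → ∀ x ∈ U \ X, ∀ y ∈ U \ X, ∃ p ∈ U \ X, ∃ q ∈ U \ X,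
    (x = p ∨ D.Adj x p) ∧ (p = q ∨ D.Adj p q) ∧ (q = y ∨ D.Adj q y)

theorem ShortLinked.cliqueMinor {W : Type*} {D : SimpleGraph W} {U : Finset W} {r t : ℕ}
    (hr : 4 ≤ r) (ht : t ≤ 2 ^ r ^ 2) (hU : U.Nonempty) (hlarge : 12 * (9 * r * t) ≤ U.card)
    (hdeg : ∀ u ∈ U, U.card ≤ 3 * (U.filter (D.Adj u)).card)
    (hlink : ShortLinked D U (9 * r * t)) : GraphMinor (⊤ : SimpleGraph (Fin t)) D := by
  have main : ∀ j ≤ t, ∃ f : ℕ → Finset W,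
      (∀ i < j, f i ⊆ U ∧ (f i).card ≤ 9 * r ∧ (D.induce (f i : Set W)).Connected ∧
        ((U.filter fun u => ∀ b ∈ f i, ¬ D.Adj u b).card : ℝ) ≤
          2 * (3 / 4) ^ (3 * r) * U.card) ∧
      ∀ i < j, ∀ l < i, Disjoint (f l) (f i) ∧ ∃ a ∈ f l, ∃ b ∈ f i, D.Adj a b := by
    intro j
    induction j with
    | zero => exact fun _ => ⟨fun _ => ∅, by simp, by simp⟩
    | succ j ih =>
      intro hj
      obtain ⟨f, hf, hpair⟩ := ih (by omega)
      let X : Finset W := (range j).biUnion f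
      have hX : X.card ≤ 9 * r * t := by
        calc X.card ≤ (range j).card * (9 * r) :=
              Finset.card_biUnion_le_card_mul _ _ _ fun i hi => (hf i (Finset.mem_range.1 hi)).2.1
          _ ≤ 9 * r * t := by
            rw [Finset.card_range, mul_comm]
            exact Nat.mul_le_mul le_rfl (by omega)
      have hZcard : U.card ≤ (U \ X).card + X.card := by
        have := Finset.le_card_sdiff X U
        omega
      have hUpos := hU.card_pos
      have hZ : (U \ X).Nonempty := by
        rw [← Finset.card_pos]
        omega
      obtain ⟨b, hbZ, hbA, hbU⟩ := exists_dominating_tuple D hZ hU (3 * r)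
        (fun u hu => by
          have h1 := hdeg u hu
          have h2 : (U.filter (D.Adj u)).card ≤ ((U \ X).filter (D.Adj u)).card + X.card := by
            refine (Finset.card_le_card (t := (U \ X).filter (D.Adj u) ∪ X) ?_).trans
              (Finset.card_union_le _ _)
            intro z
            simp only [Finset.mem_filter, Finset.mem_union, Finset.mem_sdiff]
            tauto
          have h3 : (U \ X).card ≤ U.card := Finset.card_le_card Finset.sdiff_subset
          omega)
        (range j) (fun i => U.filter fun u => ∀ b ∈ f i, ¬ D.Adj u b)
        (θ := 4 * (3 / 4) ^ (3 * r))
        (fun i hi => by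
          have h1 := (hf i (Finset.mem_range.1 hi)).2.2.2
          have h2 : (((U \ X) ∩ U.filter fun u => ∀ b ∈ f i, ¬ D.Adj u b).card : ℝ) ≤
              (U.filter fun u => ∀ b ∈ f i, ¬ D.Adj u b).card := by
            exact_mod_cast Finset.card_le_card Finset.inter_subset_right
          have h3 : (U.card : ℝ) ≤ 2 * (U \ X).card := by
            have : U.card ≤ 2 * (U \ X).card := by omega
            exact_mod_cast this
          have h4 := mul_le_mul_of_nonneg_left h3 (show (0 : ℝ) ≤ 2 * (3 / 4) ^ (3 * r) by positivity)
          linarith)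
        (by
          rw [Finset.card_range]
          exact card_mul_pow_lt_half hr ht (by omega))
      let o : Fin (3 * r) := ⟨0, by omega⟩
      choose p hp q hq hlp hpq hql using fun k => hlink X hX (b o) (hbZ o) (b k) (hbZ k)
      let F : Finset W := univ.image b ∪ (univ.image p ∪ univ.image q)
      have hbF : ∀ k, b k ∈ F := fun k => by simp [F]
      have hpF : ∀ k, p k ∈ F := fun k => by simp [F]
      have hqF : ∀ k, q k ∈ F := fun k => by simp [F]
      have hFcases : ∀ z ∈ F, (∃ k, b k = z) ∨ (∃ k, p k = z) ∨ ∃ k, q k = z := by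
        intro z hz
        simpa [F] using hz
      have hFZ : F ⊆ U \ X := by
        intro z hz
        rcases hFcases z hz with ⟨k, rfl⟩ | ⟨k, rfl⟩ | ⟨k, rfl⟩
        exacts [hbZ k, hp k, hq k]
      have hFcard : F.card ≤ 9 * r := by
        have h1 : ∀ g : Fin (3 * r) → W, (univ.image g).card ≤ 3 * r := fun g =>
          Finset.card_image_le.trans (by simp)
        have h2 : F.card ≤ _ := Finset.card_union_le (univ.image b) (univ.image p ∪ univ.image q)
        have h3 := Finset.card_union_le (univ.image p) (univ.image q)
        have := h1 b
        have := h1 p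
        have := h1 q
        omega
      have hFconn : (D.induce (F : Set W)).Connected := by
        refine SimpleGraph.induce_connected_of_reflTransGen (u := b o) (hbF o) ?_
        have stepTo : ∀ {a c}, Relation.ReflTransGen (fun a b => D.Adj a b ∧ b ∈ (F : Set W)) (b o) a
            → c ∈ F → (a = c ∨ D.Adj a c) →
            Relation.ReflTransGen (fun a b => D.Adj a b ∧ b ∈ (F : Set W)) (b o) c := by
          rintro a c h hc (rfl | hac)
          · exact h
          · exact h.tail ⟨hac, hc⟩
        have h1 := fun k => stepTo .refl (hpF k) (hlp k)
        have h2 := fun k => stepTo (h1 k) (hqF k) (hpq k)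
        have h3 := fun k => stepTo (h2 k) (hbF k) (hql k)
        intro z hz
        rcases hFcases z hz with ⟨k, rfl⟩ | ⟨k, rfl⟩ | ⟨k, rfl⟩
        exacts [h3 k, h1 k, h2 k]
      have hupd : ∀ i < j, Function.update f j F i = f i := fun i hi =>
        Function.update_of_ne hi.ne _ _
      refine ⟨Function.update f j F, fun i hi => ?_, fun i hi l hl => ?_⟩
      · rcases Nat.lt_succ_iff_lt_or_eq.1 hi with hi | rfl
        · rw [hupd i hi]
          exact hf i hi
        · rw [Function.update_self]
          refine ⟨hFZ.trans Finset.sdiff_subset, hFcard, hFconn, le_trans ?_ hbU⟩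
          refine Nat.cast_le.2 (Finset.card_le_card fun u hu => ?_)
          rw [Finset.mem_filter] at hu ⊢
          exact ⟨hu.1, fun k => hu.2 (b k) (hbF k)⟩
      · rcases Nat.lt_succ_iff_lt_or_eq.1 hi with hi | rfl
        · rw [hupd i hi, hupd l (hl.trans hi)]
          exact hpair i hi l hl
        · rw [Function.update_self, hupd l hl]
          refine ⟨?_, ?_⟩
          · rw [Finset.disjoint_left]
            intro z hz hzF
            exact (Finset.mem_sdiff.1 (hFZ hzF)).2
              (Finset.mem_biUnion.2 ⟨l, Finset.mem_range.2 hl, hz⟩)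
          · obtain ⟨k, hk⟩ := hbA l (Finset.mem_range.2 hl)
            have hkU := (Finset.mem_sdiff.1 (hbZ k)).1
            simp only [Finset.mem_filter, not_and, hkU, true_imp_iff] at hk
            push Not at hk
            obtain ⟨a, ha, hadj⟩ := hk
            exact ⟨a, ha, b k, hbF k, hadj.symm⟩
  obtain ⟨f, hf, hpair⟩ := main t le_rfl
  refine ⟨fun i => (f i : Set W), fun i => (hf i i.2).2.2.1, fun i l hil => ?_, fun i l hil => ?_⟩
  · rcases lt_or_gt_of_ne (Fin.val_injective.ne hil) with h | h
    · exact Finset.disjoint_coe.2 (hpair l l.2 i h).1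
    · exact (Finset.disjoint_coe.2 (hpair i i.2 l h).1).symm
  · rcases lt_or_gt_of_ne (Fin.val_injective.ne hil.ne) with h | h
    · exact (hpair l l.2 i h).2
    · obtain ⟨a, ha, b, hb, hab⟩ := (hpair i i.2 l h).2
      exact ⟨b, hb, a, ha, hab.symm⟩

theorem cliqueMinor_of_half_degree {W : Type*} {D : SimpleGraph W} {M : Finset W} {r t : ℕ}
    (hr : 4 ≤ r) (ht1 : 1 ≤ t) (ht : t ≤ 2 ^ r ^ 2) (hlarge : 40 * (9 * r * t) ≤ M.card)
    (hdeg : ∀ x ∈ M, M.card ≤ 2 * (M.filter (D.Adj x)).card + 2) :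
    GraphMinor (⊤ : SimpleGraph (Fin t)) D := by
  set L := 9 * r * t with hL
  have hL36 : 36 ≤ L := by nlinarith
  by_cases hlink : ShortLinked D M L
  · refine hlink.cliqueMinor hr ht (Finset.card_pos.1 (by omega)) (by omega) fun u hu => ?_
    have := hdeg u hu
    omega
  unfold ShortLinked at hlink
  push Not at hlink
  obtain ⟨X, hX, x, hx, y, hy, hno⟩ := hlink
  have hbig : ∀ z ∈ M, M.card ≤ 2 * (insert z (M.filter (D.Adj z)) \ X).card + 2 + 2 * L := by
    intro z hz
    have h1 := hdeg z hz
    have h2 := Finset.le_card_sdiff X (insert z (M.filter (D.Adj z)))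
    have h3 := Finset.card_le_card (Finset.subset_insert z (M.filter (D.Adj z)))
    omega
  set U := insert x (M.filter (D.Adj x)) \ X with hUdef
  set T := insert y (M.filter (D.Adj y)) \ X with hTdef
  have hxM := (Finset.mem_sdiff.1 hx).1
  have hyM := (Finset.mem_sdiff.1 hy).1
  have hUbig := hbig x hxM
  have hTbig := hbig y hyM
  rw [← hUdef] at hUbig
  rw [← hTdef] at hTbig
  have memU : ∀ u ∈ U, u ∈ M \ X ∧ (x = u ∨ D.Adj x u) := by
    intro u hu
    simp only [hUdef, Finset.mem_sdiff, Finset.mem_insert, Finset.mem_filter] at hu ⊢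
    rcases hu with ⟨rfl | hu, hu'⟩
    · exact ⟨⟨hxM, hu'⟩, Or.inl rfl⟩
    · exact ⟨⟨hu.1, hu'⟩, Or.inr hu.2⟩
  have memT : ∀ v ∈ T, v ∈ M \ X ∧ (v = y ∨ D.Adj v y) := by
    intro u hu
    simp only [hTdef, Finset.mem_sdiff, Finset.mem_insert, Finset.mem_filter] at hu ⊢
    rcases hu with ⟨rfl | hu, hu'⟩
    · exact ⟨⟨hyM, hu'⟩, Or.inl rfl⟩
    · exact ⟨⟨hu.1, hu'⟩, Or.inr hu.2.symm⟩
  have hsep : ∀ u ∈ U, ∀ v ∈ T, u ≠ v ∧ ¬ D.Adj u v := by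
    intro u hu v hv
    have h := hno u (memU u hu).1 v (memT v hv).1 (memU u hu).2
    constructor
    · exact fun huv => not_or.2 (h (Or.inl huv)) (memT v hv).2
    · exact fun huv => not_or.2 (h (Or.inr huv)) (memT v hv).2
  have hUM : U ⊆ M := fun u hu => (Finset.mem_sdiff.1 (memU u hu).1).1
  have hTM : T ⊆ M := fun u hu => (Finset.mem_sdiff.1 (memT u hu).1).1
  have hdisj : Disjoint U T := Finset.disjoint_left.2 fun u hu hu' => (hsep u hu u hu').1 rfl
  have hUT : (U ∪ T).card = U.card + T.card := Finset.card_union_of_disjoint hdisj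
  have hUTM := Finset.card_le_card (Finset.union_subset hUM hTM)
  have hrest := Finset.card_sdiff_add_card_eq_card (Finset.union_subset hUM hTM)
  have hdegU : ∀ u ∈ U, U.card ≤ (U.filter (D.Adj u)).card + 2 + L := by
    intro u hu
    have h1 := hdeg u (hUM hu)
    have h2 : (M.filter (D.Adj u)).card ≤ (U.filter (D.Adj u)).card + (M \ (U ∪ T)).card := by
      refine (Finset.card_le_card (t := U.filter (D.Adj u) ∪ (M \ (U ∪ T))) ?_).trans
        (Finset.card_union_le _ _)
      intro z hz
      have := fun hzT => (hsep u hu z hzT).2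
      simp only [Finset.mem_filter, Finset.mem_union, Finset.mem_sdiff] at hz ⊢
      tauto
    omega
  refine ShortLinked.cliqueMinor (U := U) hr ht (Finset.card_pos.1 (by omega)) (by omega)
    (fun u hu => ?_) ?_
  · have := hdegU u hu
    omega
  · intro Y hY u hu v hv
    have h1 := hdegU u (Finset.mem_sdiff.1 hu).1
    have h2 := hdegU v (Finset.mem_sdiff.1 hv).1
    have h3 := Finset.card_union_add_card_inter (U.filter (D.Adj u)) (U.filter (D.Adj v))
    have h4 : (U.filter (D.Adj u) ∪ U.filter (D.Adj v)).card ≤ U.card :=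
      Finset.card_le_card (Finset.union_subset (Finset.filter_subset _ _)
        (Finset.filter_subset _ _))
    obtain ⟨z, hz, hzY⟩ := Finset.exists_mem_notMem_of_card_lt_card
      (s := Y) (t := U.filter (D.Adj u) ∩ U.filter (D.Adj v)) (by omega)
    simp only [Finset.mem_inter, Finset.mem_filter] at hz
    have hzU := Finset.mem_sdiff.2 ⟨hz.1.1, hzY⟩
    exact ⟨z, hzU, z, hzU, Or.inr hz.1.2, Or.inl rfl, Or.inr hz.2.2.symm⟩

/-- Every graph with `n ≥ 1` vertices and at least `360 r t n` edges has a `K_t` minor, provided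
that `t ≤ 2 ^ (r ^ 2)`. -/
theorem cliqueMinor_of_adjCount {V : Type} [Fintype V] [Nonempty V] {G : SimpleGraph V} {r t : ℕ}
    (hr : 4 ≤ r) (ht1 : 1 ≤ t) (ht : t ≤ 2 ^ r ^ 2)
    (h : 2 * (360 * r * t) * Fintype.card V ≤ G.adjCount) :
    GraphMinor (⊤ : SimpleGraph (Fin t)) G := by
  obtain ⟨W, _, H, M, hHG, hM, hdeg⟩ := exists_minor_with_dense_neighborhood
    (k := 360 * r * t) (by nlinarith) _ V G rfl Fintype.card_pos h
  refine GraphMinor.trans (cliqueMinor_of_half_degree hr ht1 ht (M := M) ?_ fun x hx => ?_) hHG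
  · exact le_trans (le_of_eq (by ring)) hM
  · refine (hdeg x hx).trans (le_of_eq ?_)
    congr 3
    ext z
    simp [and_comm]

end DenseCliqueMinor

section Voronoi
open Classical

/-- `σ` behaves like the depth function `x ↦ r + 1 - d(c, x)` of a ball with centre `c` and radius
`r`: it is `1`-Lipschitz, and from every point of its support other than `c` one can ascend. -/
structure IsDepthFunction {V : Type*} (G : SimpleGraph V) (σ : V → ℕ) (c : V) : Prop where
  pos_center : 0 < σ c
  le_center : ∀ x, σ x ≤ σ c
  le_add_one : ∀ x y, G.Adj x y → σ x ≤ σ y + 1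
  exists_ascent : ∀ x, 0 < σ x → x ≠ c → ∃ y, G.Adj x y ∧ σ y = σ x + 1

theorem IsDepthFunction.induction {V : Type*} {G : SimpleGraph V} {σ : V → ℕ} {c : V}
    (h : IsDepthFunction G σ c) {motive : V → Prop} (base : motive c)
    (step : ∀ x y, 0 < σ x → G.Adj x y → σ y = σ x + 1 → motive y → motive x) :
    ∀ x, 0 < σ x → motive x := by
  have key : ∀ n x, 0 < σ x → σ c ≤ σ x + n → motive x := by
    intro n
    induction n with
    | zero =>
      intro x hx hn
      by_cases hxc : x = c
      · exact hxc ▸ base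
      · obtain ⟨y, -, hy⟩ := h.exists_ascent x hx hxc
        have := h.le_center y
        omega
    | succ n ih =>
      intro x hx hn
      by_cases hxc : x = c
      · exact hxc ▸ base
      · obtain ⟨y, hxy, hy⟩ := h.exists_ascent x hx hxc
        exact step x y hx hxy hy (ih y (by omega) (by omega))
  exact fun x hx => key (σ c) x hx (by omega)

theorem exists_isDepthFunction_gBall {V : Type*} (G : SimpleGraph V) (c : V) (r : ℕ) :
    ∃ σ : V → ℕ, IsDepthFunction G σ c ∧ G.gBall c r = {x | 0 < σ x} := by
  refine ⟨fun x => if G.Reachable c x then r + 1 - G.dist c x else 0, ⟨?_, ?_, ?_, ?_⟩, ?_⟩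
  · simp
  · intro x
    simp only [SimpleGraph.Reachable.refl, if_true, SimpleGraph.dist_self]
    split_ifs <;> omega
  · intro x y hxy
    by_cases hx : G.Reachable c x
    · have hy : G.Reachable c y := hx.trans hxy.reachable
      simp only [hx, hy, if_true]
      have h1 : G.dist c y ≤ G.dist c x + 1 := by
        obtain ⟨p, hp⟩ := hx.exists_walk_length_eq_dist
        have := SimpleGraph.dist_le (p.concat hxy)
        rw [SimpleGraph.Walk.length_concat] at this
        omega
      omega
    · simp [hx]
  · intro x hx hxc
    by_cases hr : G.Reachable c x
    · simp only [hr, if_true] at hx ⊢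
      obtain ⟨p, hp⟩ := hr.symm.exists_walk_length_eq_dist
      cases p with
      | nil => exact absurd rfl hxc
      | @cons _ y _ hxy q =>
        have hy : G.Reachable c y := hr.trans hxy.reachable
        refine ⟨y, hxy, ?_⟩
        rw [if_pos hy]
        rw [SimpleGraph.Walk.length_cons, SimpleGraph.dist_comm] at hp
        have h1 : G.dist c y ≤ q.length := by
          rw [SimpleGraph.dist_comm]
          exact SimpleGraph.dist_le q
        have h2 : G.dist c x ≤ G.dist c y + 1 := by
          obtain ⟨p', hp'⟩ := hy.exists_walk_length_eq_dist
          have := SimpleGraph.dist_le (p'.concat hxy.symm)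
          rw [SimpleGraph.Walk.length_concat] at this
          omega
        omega
    · simp [hr] at hx
  · ext x
    simp only [SimpleGraph.gBall, Set.mem_ofPred_eq]
    by_cases hr : G.Reachable c x
    · simp only [hr, if_true, true_and]
      omega
    · simp [hr]

/-- The points where `σ i` is the largest among the functions indexed by `S`, ties being broken
by `ρ`. -/
def voronoiCell {ι V : Type*} (S : Finset ι) (ρ : ι → ℕ) (σ : ι → V → ℕ) (i : ι) : Set V :=
  {x | 0 < σ i x ∧ ∀ j ∈ S, σ j x < σ i x ∨ (σ j x = σ i x ∧ ρ i ≤ ρ j)}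

/-- Some point lies in the supports of `σ i` and `σ j` and of no other function indexed by `S`. -/
def PrivatelyMeet {ι V : Type*} (S : Finset ι) (σ : ι → V → ℕ) (i j : ι) : Prop :=
  i ≠ j ∧ ∃ x, 0 < σ i x ∧ 0 < σ j x ∧ ∀ k ∈ S, k ≠ i → k ≠ j → σ k x = 0

theorem PrivatelyMeet.symm {ι V : Type*} {S : Finset ι} {σ : ι → V → ℕ} {i j : ι}
    (h : PrivatelyMeet S σ i j) : PrivatelyMeet S σ j i := by
  obtain ⟨hij, x, hi, hj, hk⟩ := h
  exact ⟨hij.symm, x, hj, hi, fun k hkS h1 h2 => hk k hkS h2 h1⟩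

section
variable {ι V : Type*} {G : SimpleGraph V} {S : Finset ι} {ρ : ι → ℕ} {σ : ι → V → ℕ} {c : ι → V}

theorem disjoint_voronoiCell (hρ : Function.Injective ρ) {i j : ι} (hi : i ∈ S) (hj : j ∈ S)
    (hij : i ≠ j) : Disjoint (voronoiCell S ρ σ i) (voronoiCell S ρ σ j) := by
  rw [Set.disjoint_left]
  rintro x ⟨-, hxi⟩ ⟨-, hxj⟩
  have h1 := hxi j hj
  have h2 := hxj i hi
  exact hij (hρ (by omega))

theorem voronoiCell_ascent (hσ : ∀ i ∈ S, IsDepthFunction G (σ i) (c i)) {i : ι} {x y : V}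
    (hx : x ∈ voronoiCell S ρ σ i) (hxy : G.Adj x y) (h : σ i y = σ i x + 1) :
    y ∈ voronoiCell S ρ σ i := by
  refine ⟨by omega, fun j hj => ?_⟩
  have h1 := (hσ j hj).le_add_one y x hxy.symm
  have h2 := hx.2 j hj
  omega

theorem connected_voronoiCell (hσ : ∀ i ∈ S, IsDepthFunction G (σ i) (c i)) {i : ι} (hi : i ∈ S)
    (hc : c i ∈ voronoiCell S ρ σ i) : (G.induce (voronoiCell S ρ σ i)).Connected := by
  refine SimpleGraph.induce_connected_of_reflTransGen hc fun x hx => ?_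
  refine (hσ i hi).induction (motive := fun x => x ∈ voronoiCell S ρ σ i →
    Relation.ReflTransGen (fun a b => G.Adj a b ∧ b ∈ voronoiCell S ρ σ i) (c i) x)
    (fun _ => .refl) (fun x y _ hxy h ih hx => ?_) x hx.1 hx
  exact (ih (voronoiCell_ascent hσ hx hxy h)).tail ⟨hxy.symm, hx⟩

theorem mem_voronoiCell_or {i j : ι} {x : V} (hj : 0 < σ j x)
    (hk : ∀ k ∈ S, k ≠ i → k ≠ j → σ k x < σ j x) :
    x ∈ voronoiCell S ρ σ i ∨ x ∈ voronoiCell S ρ σ j := by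
  by_cases h : σ j x < σ i x ∨ (σ j x = σ i x ∧ ρ i ≤ ρ j)
  · refine Or.inl ⟨by omega, fun k hkS => ?_⟩
    by_cases h1 : k = i
    · subst h1; omega
    by_cases h2 : k = j
    · subst h2; omega
    have := hk k hkS h1 h2
    omega
  · refine Or.inr ⟨hj, fun k hkS => ?_⟩
    by_cases h1 : k = i
    · subst h1; omega
    by_cases h2 : k = j
    · subst h2; omega
    have := hk k hkS h1 h2
    omega

theorem exists_adj_voronoiCell_of_mem (hσ : ∀ i ∈ S, IsDepthFunction G (σ i) (c i))
    (hρ : Function.Injective ρ) {i j : ι} (hi : i ∈ S) (hj : j ∈ S) (hij : i ≠ j)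
    (hc : c j ∈ voronoiCell S ρ σ j) {x : V} (hx : x ∈ voronoiCell S ρ σ i) (hjx : 0 < σ j x)
    (hk : ∀ k ∈ S, k ≠ i → k ≠ j → σ k x < σ j x) :
    ∃ u ∈ voronoiCell S ρ σ i, ∃ v ∈ voronoiCell S ρ σ j, G.Adj u v := by
  refine (hσ j hj).induction (motive := fun x => x ∈ voronoiCell S ρ σ i →
    (∀ k ∈ S, k ≠ i → k ≠ j → σ k x < σ j x) →
    ∃ u ∈ voronoiCell S ρ σ i, ∃ v ∈ voronoiCell S ρ σ j, G.Adj u v) ?_ ?_ x hjx hx hk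
  · exact fun h _ => absurd hc (Set.disjoint_left.1 (disjoint_voronoiCell hρ hi hj hij) h)
  · intro x y _ hxy h ih hx hk
    have hk' : ∀ k ∈ S, k ≠ i → k ≠ j → σ k y < σ j y := by
      intro k hkS h1 h2
      have := hk k hkS h1 h2
      have := (hσ k hkS).le_add_one y x hxy.symm
      omega
    rcases mem_voronoiCell_or (ρ := ρ) (by omega) hk' with hy | hy
    · exact ih hy hk'
    · exact ⟨x, hx, y, hy, hxy⟩

theorem PrivatelyMeet.exists_adj_voronoiCell (hσ : ∀ i ∈ S, IsDepthFunction G (σ i) (c i))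
    (hρ : Function.Injective ρ) {i j : ι} (hi : i ∈ S) (hj : j ∈ S)
    (hci : c i ∈ voronoiCell S ρ σ i) (hcj : c j ∈ voronoiCell S ρ σ j)
    (h : PrivatelyMeet S σ i j) :
    ∃ u ∈ voronoiCell S ρ σ i, ∃ v ∈ voronoiCell S ρ σ j, G.Adj u v := by
  obtain ⟨hij, x, hix, hjx, hk⟩ := h
  rcases mem_voronoiCell_or (ρ := ρ) hjx
    (fun k hkS h1 h2 => (hk k hkS h1 h2).symm ▸ hjx) with hx | hx
  · exact exists_adj_voronoiCell_of_mem hσ hρ hi hj hij hcj hx hjx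
      fun k hkS h1 h2 => (hk k hkS h1 h2).symm ▸ hjx
  · obtain ⟨u, hu, v, hv, huv⟩ := exists_adj_voronoiCell_of_mem hσ hρ hj hi hij.symm hci hx hix
      fun k hkS h1 h2 => (hk k hkS h2 h1).symm ▸ hix
    exact ⟨v, hv, u, hu, huv.symm⟩

theorem PrivatelyMeet.eq_of_notMem_voronoiCell (hσ : ∀ i ∈ S, IsDepthFunction G (σ i) (c i))
    {i : ι} (hi : i ∈ S) (hc : c i ∉ voronoiCell S ρ σ i) {j l : ι}
    (hij : PrivatelyMeet S σ i j) (hil : PrivatelyMeet S σ i l) : j = l := by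
  obtain ⟨k, hkS, hki, hk⟩ : ∃ k ∈ S, k ≠ i ∧ σ i (c i) ≤ σ k (c i) := by
    by_contra hno
    push Not at hno
    refine hc ⟨(hσ i hi).pos_center, fun k hkS => ?_⟩
    by_cases h : k = i
    · subst h; omega
    · exact Or.inl (hno k hkS h)
  have hle : ∀ x, 0 < σ i x → σ i x ≤ σ k x := (hσ i hi).induction hk fun x y _ hxy h ih => by
    have := (hσ k hkS).le_add_one y x hxy.symm
    omega
  have hkey : ∀ j, PrivatelyMeet S σ i j → k = j := by
    rintro j ⟨-, x, hix, -, hx⟩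
    by_contra hkj
    have := hx k hkS hki hkj
    have := hle x hix
    omega
  exact (hkey j hij).symm.trans (hkey l hil)

end

/-- In a graph without a `K_t` minor, few pairs of balls from a finite family have a private
common point. -/
theorem card_privatelyMeet_le {ι V : Type} [Countable ι] {G : SimpleGraph V} {r t : ℕ} (hr : 4 ≤ r)
    (ht1 : 1 ≤ t) (ht : t ≤ 2 ^ r ^ 2) (hG : ¬ GraphMinor (⊤ : SimpleGraph (Fin t)) G)
    {S : Finset ι} {σ : ι → V → ℕ} {c : ι → V}
    (hσ : ∀ i ∈ S, IsDepthFunction G (σ i) (c i)) :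
    ((S ×ˢ S).filter fun e => PrivatelyMeet S σ e.1 e.2).card ≤
      2 * (360 * r * t + 1) * S.card := by
  obtain ⟨ρ, hρ⟩ := exists_injective_nat ι
  let S' := S.filter fun i => c i ∈ voronoiCell S ρ σ i
  have hS' : ∀ i : S', i.1 ∈ S ∧ c i ∈ voronoiCell S ρ σ i := fun i => Finset.mem_filter.1 i.2
  let J : SimpleGraph S' :=
    { Adj := fun i j => PrivatelyMeet S σ i j
      symm := ⟨fun i j h => h.symm⟩
      loopless := ⟨fun i h => h.1 rfl⟩ }
  have hJ : GraphMinor J G :=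
    ⟨fun i => voronoiCell S ρ σ i, fun i => connected_voronoiCell hσ (hS' i).1 (hS' i).2,
      fun i j hij => disjoint_voronoiCell hρ (hS' i).1 (hS' j).1 fun h => hij (Subtype.ext h),
      fun i j hij => PrivatelyMeet.exists_adj_voronoiCell hσ hρ (hS' i).1 (hS' j).1 (hS' i).2
        (hS' j).2 hij⟩
  have hJcount : J.adjCount ≤ 2 * (360 * r * t) * S'.card := by
    rcases isEmpty_or_nonempty S' with hemp | hne
    · simp [SimpleGraph.adjCount]
    · by_contra hlt
      push Not at hlt
      rw [← Fintype.card_coe S'] at hlt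
      exact hG ((cliqueMinor_of_adjCount hr ht1 ht hlt.le).trans hJ)
  have hJeq : ((S' ×ˢ S').filter fun e => PrivatelyMeet S σ e.1 e.2).card = J.adjCount := by
    rw [Finset.card_filter, Finset.sum_product, SimpleGraph.adjCount, ← Finset.sum_coe_sort S']
    refine Finset.sum_congr rfl fun i _ => ?_
    rw [← Finset.sum_coe_sort S']
  let S'' := S.filter fun i => c i ∉ voronoiCell S ρ σ i
  have hcard : S'.card + S''.card = S.card := Finset.card_filter_add_card_filter_not _
  have h1 : ((S'' ×ˢ S).filter fun e => PrivatelyMeet S σ e.1 e.2).card ≤ S''.card := by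
    refine Finset.card_le_card_of_injOn Prod.fst (fun e he => ?_) ?_
    · exact (Finset.mem_product.1 (Finset.mem_filter.1 he).1).1
    · rintro ⟨i, j⟩ he ⟨i', l⟩ he' (rfl : i = i')
      rw [Finset.mem_coe, Finset.mem_filter, Finset.mem_product] at he he'
      have hi := Finset.mem_filter.1 he.1.1
      exact Prod.ext rfl (PrivatelyMeet.eq_of_notMem_voronoiCell hσ hi.1 hi.2 he.2 he'.2)
  have h2 : ((S ×ˢ S'').filter fun e => PrivatelyMeet S σ e.1 e.2).card ≤ S''.card := by
    refine Finset.card_le_card_of_injOn Prod.snd (fun e he => ?_) ?_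
    · exact (Finset.mem_product.1 (Finset.mem_filter.1 he).1).2
    · rintro ⟨j, i⟩ he ⟨l, i'⟩ he' (rfl : i = i')
      rw [Finset.mem_coe, Finset.mem_filter, Finset.mem_product] at he he'
      have hi := Finset.mem_filter.1 he.1.2
      exact Prod.ext (PrivatelyMeet.eq_of_notMem_voronoiCell hσ hi.1 hi.2 he.2.symm he'.2.symm) rfl
  have hsub : ((S ×ˢ S).filter fun e => PrivatelyMeet S σ e.1 e.2) ⊆
      ((S' ×ˢ S').filter fun e => PrivatelyMeet S σ e.1 e.2) ∪
      (((S'' ×ˢ S).filter fun e => PrivatelyMeet S σ e.1 e.2) ∪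
        ((S ×ˢ S'').filter fun e => PrivatelyMeet S σ e.1 e.2)) := by
    intro e
    simp only [Finset.mem_union, Finset.mem_filter, Finset.mem_product, S', S'']
    tauto
  have h3 := (Finset.card_le_card hsub).trans (Finset.card_union_le _ _)
  have h4 := Finset.card_union_le ((S'' ×ˢ S).filter fun e => PrivatelyMeet S σ e.1 e.2)
    ((S ×ˢ S'').filter fun e => PrivatelyMeet S σ e.1 e.2)
  have h5 : 2 * (360 * r * t) * S'.card ≤ 2 * (360 * r * t) * S.card :=
    Nat.mul_le_mul le_rfl (by omega)
  have h6 : 2 * (360 * r * t + 1) * S.card = 2 * (360 * r * t) * S.card + 2 * S.card := by ring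
  omega

end Voronoi

section Sampling
open Classical

/-- The probability of obtaining `S` when each `i ∈ T` is chosen independently with
probability `p i`. -/
noncomputable def sampleProb {ι : Type*} (T : Finset ι) (p : ι → ℝ) (S : Finset ι) : ℝ :=
  (∏ i ∈ S, p i) * ∏ i ∈ T \ S, (1 - p i)

theorem sampleProb_nonneg {ι : Type*} {T S : Finset ι} {p : ι → ℝ} (hS : S ⊆ T)
    (hp : ∀ i ∈ T, 0 ≤ p i ∧ p i ≤ 1) : 0 ≤ sampleProb T p S :=
  mul_nonneg (Finset.prod_nonneg fun i hi => (hp i (hS hi)).1)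
    (Finset.prod_nonneg fun i hi => sub_nonneg.2 (hp i (Finset.sdiff_subset hi)).2)

theorem sum_sampleProb {ι : Type*} {T A B : Finset ι} (p : ι → ℝ) (hA : A ⊆ T) (hB : B ⊆ T)
    (hAB : Disjoint A B) :
    ∑ S ∈ T.powerset, (if A ⊆ S ∧ Disjoint S B then sampleProb T p S else 0) =
      (∏ i ∈ A, p i) * ∏ i ∈ B, (1 - p i) := by
  have h1 := Finset.prod_add (fun i => if i ∈ B then 0 else p i)
    (fun i => if i ∈ A then 0 else 1 - p i) T
  have h2 : ∀ S ∈ T.powerset, (if A ⊆ S ∧ Disjoint S B then sampleProb T p S else 0) =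
      (∏ i ∈ S, if i ∈ B then 0 else p i) * ∏ i ∈ T \ S, if i ∈ A then 0 else 1 - p i := by
    intro S hS
    by_cases hAS : A ⊆ S
    · by_cases hSB : Disjoint S B
      · rw [if_pos ⟨hAS, hSB⟩, sampleProb]
        congr 1
        · refine Finset.prod_congr rfl fun i hi => ?_
          rw [if_neg (Finset.disjoint_left.1 hSB hi)]
        · refine Finset.prod_congr rfl fun i hi => ?_
          rw [if_neg fun h => (Finset.mem_sdiff.1 hi).2 (hAS h)]
      · rw [if_neg fun h => hSB h.2]
        obtain ⟨i, hiS, hiB⟩ := Finset.not_disjoint_iff.1 hSB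
        rw [Finset.prod_eq_zero hiS (by simp [hiB]), zero_mul]
    · rw [if_neg fun h => hAS h.1]
      obtain ⟨i, hiA, hiS⟩ := Finset.not_subset.1 hAS
      rw [Finset.prod_eq_zero (s := T \ S) (Finset.mem_sdiff.2 ⟨hA hiA, hiS⟩) (by simp [hiA]),
        mul_zero]
  rw [Finset.sum_congr rfl h2, ← h1]
  have h3 : ∀ i ∈ T, ((if i ∈ B then 0 else p i) + if i ∈ A then 0 else 1 - p i) =
      (if i ∈ A then p i else 1) * if i ∈ B then 1 - p i else 1 := by
    intro i _
    by_cases hiA : i ∈ A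
    · have := Finset.disjoint_left.1 hAB hiA
      simp [hiA, this]
    · by_cases hiB : i ∈ B <;> simp [hiA, hiB]
  rw [Finset.prod_congr rfl h3, Finset.prod_mul_distrib, Finset.prod_ite_mem,
    Finset.prod_ite_mem, Finset.inter_eq_right.2 hA, Finset.inter_eq_right.2 hB]

theorem one_sub_sum_le_prod_one_sub {ι : Type*} (B : Finset ι) (p : ι → ℝ)
    (hp : ∀ i ∈ B, 0 ≤ p i ∧ p i ≤ 1) : 1 - ∑ i ∈ B, p i ≤ ∏ i ∈ B, (1 - p i) := by
  induction B using Finset.induction_on with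
  | empty => simp
  | insert a B ha ih =>
    rw [Finset.sum_insert ha, Finset.prod_insert ha]
    have h1 := ih fun i hi => hp i (Finset.mem_insert_of_mem hi)
    have h2 := hp a (Finset.mem_insert_self a B)
    have h3 : 0 ≤ ∑ i ∈ B, p i :=
      Finset.sum_nonneg fun i hi => (hp i (Finset.mem_insert_of_mem hi)).1
    have h4 := mul_le_mul_of_nonneg_left h1 (sub_nonneg.2 h2.2)
    nlinarith [mul_nonneg h2.1 h3]

/-- The supports of `σ i` and `σ j` intersect. -/
def SupportsMeet {ι V : Type*} (σ : ι → V → ℕ) (i j : ι) : Prop := ∃ x, 0 < σ i x ∧ 0 < σ j x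

theorem sum_supportsMeet_le {ι V : Type*} {T : Finset ι} {σ : ι → V → ℕ} {p : ι → ℝ} {Λ : ℝ}
    (hp : ∀ i ∈ T, 0 ≤ p i ∧ p i ≤ 1)
    (hload : ∀ x, ∑ i ∈ T.filter (fun i => 0 < σ i x), p i ≤ 1 / 2)
    (hfew : ∀ S ⊆ T, (((S ×ˢ S).filter fun e => PrivatelyMeet S σ e.1 e.2).card : ℝ) ≤
      Λ * S.card) :
    ∑ i ∈ T, ∑ j ∈ T, (if i ≠ j ∧ SupportsMeet σ i j then p i * p j else 0) ≤
      2 * Λ * ∑ i ∈ T, p i := by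
  have hsize : ∑ S ∈ T.powerset, sampleProb T p S * S.card = ∑ i ∈ T, p i := by
    have h1 : ∀ S ∈ T.powerset, sampleProb T p S * S.card =
        ∑ i ∈ T, if {i} ⊆ S ∧ Disjoint S ∅ then sampleProb T p S else 0 := by
      intro S hS
      rw [← Finset.sum_filter, Finset.sum_const, nsmul_eq_mul, mul_comm]
      congr 3
      ext i
      have : i ∈ S → i ∈ T := fun h => Finset.mem_powerset.1 hS h
      simp only [Finset.mem_filter, Finset.singleton_subset_iff, Finset.disjoint_empty_right]
      tauto
    rw [Finset.sum_congr rfl h1, Finset.sum_comm]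
    refine Finset.sum_congr rfl fun i hi => ?_
    rw [sum_sampleProb p (Finset.singleton_subset_iff.2 hi) (Finset.empty_subset _)
      (Finset.disjoint_empty_right _)]
    simp
  have hpairs : ∑ S ∈ T.powerset,
      sampleProb T p S * ((S ×ˢ S).filter fun e => PrivatelyMeet S σ e.1 e.2).card =
      ∑ i ∈ T, ∑ j ∈ T, ∑ S ∈ T.powerset,
        if i ∈ S ∧ j ∈ S ∧ PrivatelyMeet S σ i j then sampleProb T p S else 0 := by
    have h1 : ∀ S ∈ T.powerset,
        sampleProb T p S * ((S ×ˢ S).filter fun e => PrivatelyMeet S σ e.1 e.2).card =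
        ∑ i ∈ T, ∑ j ∈ T,
          if i ∈ S ∧ j ∈ S ∧ PrivatelyMeet S σ i j then sampleProb T p S else 0 := by
      intro S hS
      rw [← Finset.sum_product', ← Finset.sum_filter, Finset.sum_const, nsmul_eq_mul, mul_comm]
      congr 3
      ext ⟨i, j⟩
      have h1 : i ∈ S → i ∈ T := fun h => Finset.mem_powerset.1 hS h
      have h2 : j ∈ S → j ∈ T := fun h => Finset.mem_powerset.1 hS h
      simp only [Finset.mem_filter, Finset.mem_product]
      tauto
    rw [Finset.sum_congr rfl h1, Finset.sum_comm]
    refine Finset.sum_congr rfl fun i _ => ?_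
    rw [Finset.sum_comm]
  have hlower : ∀ i ∈ T, ∀ j ∈ T, (if i ≠ j ∧ SupportsMeet σ i j then p i * p j else 0) ≤
      2 * ∑ S ∈ T.powerset,
        if i ∈ S ∧ j ∈ S ∧ PrivatelyMeet S σ i j then sampleProb T p S else 0 := by
    intro i hi j hj
    split_ifs with hij
    · obtain ⟨hij, x, hix, hjx⟩ := hij
      let B := (T.filter fun k => 0 < σ k x) \ {i, j}
      have hBT : B ⊆ T := Finset.sdiff_subset.trans (Finset.filter_subset _ _)
      have h1 := sum_sampleProb (A := {i, j}) (B := B) p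
        (Finset.insert_subset hi (Finset.singleton_subset_iff.2 hj)) hBT Finset.disjoint_sdiff
      have h2 : (1 : ℝ) / 2 ≤ ∏ k ∈ B, (1 - p k) := by
        refine le_trans ?_ (one_sub_sum_le_prod_one_sub B p fun k hk => hp k (hBT hk))
        have : ∑ k ∈ B, p k ≤ ∑ k ∈ T.filter (fun i => 0 < σ i x), p k :=
          Finset.sum_le_sum_of_subset_of_nonneg Finset.sdiff_subset
            fun k hk _ => (hp k (Finset.filter_subset _ _ hk)).1
        linarith [hload x]
      have h3 : ∑ S ∈ T.powerset, (if {i, j} ⊆ S ∧ Disjoint S B then sampleProb T p S else 0) ≤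
          ∑ S ∈ T.powerset,
            if i ∈ S ∧ j ∈ S ∧ PrivatelyMeet S σ i j then sampleProb T p S else 0 := by
        refine Finset.sum_le_sum fun S hS => ?_
        have hST := Finset.mem_powerset.1 hS
        have h0 := sampleProb_nonneg hST hp
        by_cases hS2 : {i, j} ⊆ S ∧ Disjoint S B
        · rw [if_pos hS2, if_pos]
          refine ⟨hS2.1 (by simp), hS2.1 (by simp), hij, x, hix, hjx, fun k hkS hki hkj => ?_⟩
          by_contra hk
          refine Finset.disjoint_left.1 hS2.2 hkS ?_
          simp [B, hST hkS, hki, hkj, Nat.pos_of_ne_zero hk]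
        · rw [if_neg hS2]
          split_ifs <;> simp [h0]
      rw [Finset.prod_pair hij] at h1
      have h4 := mul_le_mul_of_nonneg_left h2 (mul_nonneg (hp i hi).1 (hp j hj).1)
      linarith
    · refine mul_nonneg zero_le_two (Finset.sum_nonneg fun S hS => ?_)
      split_ifs
      · exact sampleProb_nonneg (Finset.mem_powerset.1 hS) hp
      · exact le_rfl
  calc _ ≤ ∑ i ∈ T, ∑ j ∈ T, 2 * ∑ S ∈ T.powerset,
        (if i ∈ S ∧ j ∈ S ∧ PrivatelyMeet S σ i j then sampleProb T p S else 0) :=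
        Finset.sum_le_sum fun i hi => Finset.sum_le_sum fun j hj => hlower i hi j hj
    _ = 2 * ∑ S ∈ T.powerset,
        sampleProb T p S * ((S ×ˢ S).filter fun e => PrivatelyMeet S σ e.1 e.2).card := by
      simp only [hpairs, Finset.mul_sum]
    _ ≤ 2 * ∑ S ∈ T.powerset, sampleProb T p S * (Λ * S.card) := by
      refine mul_le_mul_of_nonneg_left (Finset.sum_le_sum fun S hS => ?_) zero_le_two
      have hST := Finset.mem_powerset.1 hS
      exact mul_le_mul_of_nonneg_left (hfew S hST) (sampleProb_nonneg hST hp)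
    _ = 2 * Λ * ∑ i ∈ T, p i := by
      rw [← hsize, Finset.mul_sum, Finset.mul_sum]
      exact Finset.sum_congr rfl fun S _ => by ring

theorem exists_disjoint_supports {ι V : Type*} {σ : ι → V → ℕ} {w : ι → ℝ} {Λ : ℝ}
    (n : ℕ) : ∀ T : Finset ι, T.card ≤ n → (∀ i ∈ T, ∃ x, 0 < σ i x) → (∀ i ∈ T, 0 ≤ w i) →
      (∀ x, ∑ i ∈ T.filter (fun i => 0 < σ i x), w i ≤ 1) →
      (∀ S ⊆ T, (((S ×ˢ S).filter fun e => PrivatelyMeet S σ e.1 e.2).card : ℝ) ≤ Λ * S.card) →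
      ∃ M ⊆ T, (∀ i ∈ M, ∀ j ∈ M, i ≠ j → ¬ SupportsMeet σ i j) ∧
        ∑ i ∈ T, w i ≤ (4 * Λ + 1) * M.card := by
  induction n with
  | zero =>
    intro T hT _ _ _ _
    rw [Nat.le_zero, Finset.card_eq_zero] at hT
    subst hT
    exact ⟨∅, by simp, by simp, by simp⟩
  | succ n ih =>
    intro T hT hne hw hload hfew
    rcases (Finset.sum_nonneg hw).eq_or_lt with h0 | hpos
    · exact ⟨∅, by simp, by simp, by simp [← h0]⟩
    have hle1 : ∀ i ∈ T, w i ≤ 1 := by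
      intro i hi
      obtain ⟨x, hx⟩ := hne i hi
      exact (Finset.single_le_sum (f := w) (fun k hk => hw k (Finset.filter_subset _ _ hk))
        (Finset.mem_filter.2 ⟨hi, hx⟩)).trans (hload x)
    have hsum := sum_supportsMeet_le (p := fun i => w i / 2) (Λ := Λ) (σ := σ) (T := T)
      (fun i hi => ⟨by linarith [hw i hi], by linarith [hle1 i hi]⟩)
      (fun x => by rw [← Finset.sum_div]; linarith [hload x]) hfew
    obtain ⟨i, hi, hdeg⟩ : ∃ i ∈ T,
        ∑ j ∈ T, (if i ≠ j ∧ SupportsMeet σ i j then w j else 0) ≤ 4 * Λ := by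
      by_contra hno
      push Not at hno
      have h1 : ∑ i ∈ T, w i * (4 * Λ) <
          ∑ i ∈ T, w i * ∑ j ∈ T, (if i ≠ j ∧ SupportsMeet σ i j then w j else 0) := by
        obtain ⟨i, hi, hwi⟩ := Finset.exists_lt_of_sum_lt
          (s := T) (f := fun _ => (0 : ℝ)) (g := w) (by simpa using hpos)
        exact Finset.sum_lt_sum
          (fun i hi => mul_le_mul_of_nonneg_left (hno i hi).le (hw i hi))
          ⟨i, hi, mul_lt_mul_of_pos_left (hno i hi) hwi⟩
      have h2 : ∑ i ∈ T, w i * ∑ j ∈ T, (if i ≠ j ∧ SupportsMeet σ i j then w j else 0) =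
          4 * ∑ i ∈ T, ∑ j ∈ T,
            (if i ≠ j ∧ SupportsMeet σ i j then w i / 2 * (w j / 2) else 0) := by
        simp only [Finset.mul_sum]
        refine Finset.sum_congr rfl fun i _ => Finset.sum_congr rfl fun j _ => ?_
        split_ifs <;> ring
      rw [← Finset.sum_mul] at h1
      rw [← Finset.sum_div] at hsum
      linarith
    let T' := T.filter fun j => ¬ SupportsMeet σ i j
    have hT'T : T' ⊆ T := Finset.filter_subset _ _
    have hself : SupportsMeet σ i i := by
      obtain ⟨x, hx⟩ := hne i hi
      exact ⟨x, hx, hx⟩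
    have hcard : T'.card < T.card := Finset.card_lt_card
      (Finset.filter_ssubset.2 ⟨i, hi, not_not.2 hself⟩)
    obtain ⟨M, hMT', hM, hWM⟩ := ih T' (by omega) (fun j hj => hne j (hT'T hj))
      (fun j hj => hw j (hT'T hj))
      (fun x => (Finset.sum_le_sum_of_subset_of_nonneg (Finset.filter_subset_filter _ hT'T)
        fun k hk _ => hw k (Finset.filter_subset _ _ hk)).trans (hload x))
      (fun S hS => hfew S (hS.trans hT'T))
    have hiM : ∀ j ∈ M, ¬ SupportsMeet σ i j := fun j hj => (Finset.mem_filter.1 (hMT' hj)).2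
    refine ⟨insert i M, Finset.insert_subset hi (hMT'.trans hT'T), ?_, ?_⟩
    · intro j hj l hl hjl
      rcases Finset.mem_insert.1 hj with rfl | hj' <;>
        rcases Finset.mem_insert.1 hl with rfl | hl'
      · exact absurd rfl hjl
      · exact hiM l hl'
      · exact fun ⟨x, h1, h2⟩ => hiM j hj' ⟨x, h2, h1⟩
      · exact hM j hj' l hl' hjl
    · rw [Finset.card_insert_of_notMem fun h => hiM i h hself]
      have h1 : ∑ j ∈ T.filter (fun j => SupportsMeet σ i j), w j ≤ w i +
          ∑ j ∈ T, (if i ≠ j ∧ SupportsMeet σ i j then w j else 0) := by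
        rw [← Finset.sum_filter]
        have hsub : T.filter (fun j => SupportsMeet σ i j) =
            insert i (T.filter fun j => i ≠ j ∧ SupportsMeet σ i j) := by
          ext j
          by_cases hij : i = j
          · subst hij; simp [hi, hself]
          · simp [hij, Ne.symm hij]
        rw [hsub, Finset.sum_insert (by simp)]
      have h2 := Finset.sum_filter_add_sum_filter_not T (fun j => SupportsMeet σ i j) w
      have h3 := hle1 i hi
      push_cast
      linarith

end Sampling

section BallMatchings
open Classical

theorem card_le_matchingNumber {V : Type*} [Fintype V] {E : Set (Set V)} {M : Finset (Set V)}
    (hME : ↑M ⊆ E) (hM : (M : Set (Set V)).Pairwise Disjoint) : M.card ≤ matchingNumber E := by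
  refine le_csSup ⟨Fintype.card (Set V), ?_⟩ ⟨M, hME, hM, rfl⟩
  rintro n ⟨M', -, -, rfl⟩
  exact Finset.card_le_univ M'

theorem IsFractionalMatching.sum_nonpos_of_isEmpty {V : Type*} [Fintype V] [IsEmpty V]
    {G : SimpleGraph V} {E : Set (Set V)} (hE : IsBallHypergraph G E) {w : Set V → ℝ}
    (hw : IsFractionalMatching E w) : ∑ e : Set V, w e ≤ 0 :=
  Finset.sum_nonpos fun e _ => (hw.2.1 e fun he => isEmptyElim (hE e he).choose).le

theorem sum_le_matchingNumber {V : Type} [Fintype V] {G : SimpleGraph V} {E : Set (Set V)}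
    {r t : ℕ} (hr : 4 ≤ r) (ht1 : 1 ≤ t) (ht : t ≤ 2 ^ r ^ 2)
    (hG : ¬ GraphMinor (⊤ : SimpleGraph (Fin t)) G) (hE : IsBallHypergraph G E)
    {w : Set V → ℝ} (hw : IsFractionalMatching E w) :
    ∑ e : Set V, w e ≤ (2880 * r * t + 9) * matchingNumber E := by
  rcases isEmpty_or_nonempty V with hV | hV
  · exact (hw.sum_nonpos_of_isEmpty hE).trans (by positivity)
  obtain ⟨hw0, hwE, hload⟩ := hw
  have hdepth : ∀ e : Set V, ∃ (σ : V → ℕ) (c : V), e ∈ E →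
      IsDepthFunction G σ c ∧ ∀ x, x ∈ e ↔ 0 < σ x := by
    intro e
    by_cases he : e ∈ E
    · obtain ⟨v, k, rfl⟩ := hE e he
      obtain ⟨σ, hσ, h⟩ := exists_isDepthFunction_gBall G v k
      exact ⟨σ, v, fun _ => ⟨hσ, fun x => by rw [h]; rfl⟩⟩
    · exact ⟨fun _ => 0, Classical.arbitrary V, fun h => absurd h he⟩
  choose σ c hσ using hdepth
  let T : Finset (Set V) := Finset.univ.filter (· ∈ E)
  have hT : ∀ e ∈ T, e ∈ E := fun e he => (Finset.mem_filter.1 he).2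
  obtain ⟨M, hMT, hM, hsum⟩ := exists_disjoint_supports (σ := σ) (w := w)
    (Λ := 2 * (360 * r * t + 1)) T.card T le_rfl
    (fun e he => ⟨c e, (hσ e (hT e he)).1.pos_center⟩) (fun e _ => hw0 e)
    (fun x => by
      refine le_trans ?_ (hload x)
      simp only [Set.indicator_apply, ← Finset.sum_filter]
      refine Finset.sum_le_sum_of_subset_of_nonneg (fun e he => ?_) fun e _ _ => hw0 e
      obtain ⟨heT, hex⟩ := Finset.mem_filter.1 he
      exact Finset.mem_filter.2 ⟨Finset.mem_univ e, ((hσ e (hT e heT)).2 x).2 hex⟩)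
    (fun S hS => by
      exact_mod_cast card_privatelyMeet_le hr ht1 ht hG (σ := σ) (c := c)
        fun e he => (hσ e (hT e (hS he))).1)
  have hMν : M.card ≤ matchingNumber E := by
    refine card_le_matchingNumber (fun e he => hT e (hMT he)) fun e he f hf hef => ?_
    refine Set.disjoint_left.2 fun x hxe hxf => hM e he f hf hef ⟨x, ?_, ?_⟩
    · exact ((hσ e (hT e (hMT he))).2 x).1 hxe
    · exact ((hσ f (hT f (hMT hf))).2 x).1 hxf
  have hsumT : ∑ e : Set V, w e = ∑ e ∈ T, w e :=
    (Finset.sum_subset (Finset.filter_subset _ _) fun e _ he =>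
      hwE e fun h => he (Finset.mem_filter.2 ⟨Finset.mem_univ e, h⟩)).symm
  calc ∑ e : Set V, w e ≤ (4 * (2 * (360 * r * t + 1)) + 1) * M.card := hsumT.trans_le hsum
    _ = (2880 * r * t + 9) * M.card := by ring
    _ ≤ (2880 * r * t + 9) * matchingNumber E :=
      mul_le_mul_of_nonneg_left (Nat.cast_le.2 hMν) (by positivity)

end BallMatchings

theorem graphMinor_top_fin_one {V : Type*} [Nonempty V] (G : SimpleGraph V) :
    GraphMinor (⊤ : SimpleGraph (Fin 1)) G := by
  refine ⟨fun _ => {Classical.arbitrary V}, fun _ => ?_, fun i j hij => ?_, fun i j hij => ?_⟩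
  · exact SimpleGraph.induce_connected_of_reflTransGen rfl
      fun v hv => by rw [Set.mem_singleton_iff.1 hv]
  · exact absurd (Subsingleton.elim i j) hij
  · exact absurd (Subsingleton.elim i j) hij.ne

/-- A radius `r` of order `√(log t)` with `t ≤ 2 ^ r ^ 2`. -/
theorem exists_radius {t : ℕ} (ht : 2 ≤ t) : ∃ r : ℕ, 4 ≤ r ∧ t ≤ 2 ^ r ^ 2 ∧
    (r : ℝ) ≤ 7 * Real.sqrt (Real.log t) ∧ 1 / 2 ≤ Real.sqrt (Real.log t) := by
  have h2 := Real.log_two_gt_d9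
  have htR : (2 : ℝ) ≤ t := by exact_mod_cast ht
  have hlog : Real.log 2 ≤ Real.log t := Real.log_le_log two_pos htR
  have hs : 4 / 5 ≤ Real.sqrt (Real.log t) := Real.le_sqrt_of_sq_le (by norm_num at h2 ⊢; linarith)
  have hsq := Real.sq_sqrt (show 0 ≤ Real.log t by linarith)
  set s := Real.sqrt (Real.log t)
  have hr1 := Nat.le_ceil (5 * s)
  have hr2 := Nat.ceil_lt_add_one (show 0 ≤ 5 * s by linarith)
  refine ⟨⌈5 * s⌉₊, ?_, ?_, by linarith, by linarith⟩
  · have : (4 : ℝ) ≤ ⌈5 * s⌉₊ := by linarith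
    exact_mod_cast this
  · have h : Real.log t ≤ Real.log ((2 : ℝ) ^ ⌈5 * s⌉₊ ^ 2) := by
      rw [Real.log_pow]
      push_cast
      have : (5 * s) ^ 2 ≤ (⌈5 * s⌉₊ : ℝ) ^ 2 := pow_le_pow_left₀ (by linarith) hr1 2
      nlinarith
    exact_mod_cast (Real.log_le_log_iff (by linarith) (by positivity)).1 h

end CliqueMinorFreeBalls

/-- There is an absolute constant `c > 0` such that for every integer `t ≥ 1`, every
graph `G` with no `K_t` minor, and every ball hypergraph `𝓗` of `G`, the fractional
matching number satisfies `ν*(𝓗) ≤ c·t·√(log t)·ν(𝓗)`: every fractional matching has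
total weight at most `c·t·√(log t)·ν(𝓗)`. -/
theorem nuStar_le_const_Kt :
    ∃ c : ℝ, 0 < c ∧
      ∀ t : ℕ, 1 ≤ t →
        ∀ (V : Type) [Fintype V] (G : SimpleGraph V) (E : Set (Set V)),
          ¬ GraphMinor (⊤ : SimpleGraph (Fin t)) G →
          IsBallHypergraph G E →
          ∀ w : Set V → ℝ, IsFractionalMatching E w →
            ∑ e : Set V, w e ≤
              c * (t : ℝ) * Real.sqrt (Real.log t) * (matchingNumber E : ℝ) := by
  refine ⟨20169, by norm_num, fun t ht V _ G E hG hE w hw => ?_⟩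
  rcases ht.eq_or_lt with rfl | ht2
  · have : IsEmpty V := not_nonempty_iff.1 fun _ => hG (graphMinor_top_fin_one G)
    exact (hw.sum_nonpos_of_isEmpty hE).trans (by positivity)
  · obtain ⟨r, hr, htr, hrs, hs⟩ := exists_radius ht2
    refine (sum_le_matchingNumber hr ht htr hG hE hw).trans
      (mul_le_mul_of_nonneg_right ?_ (Nat.cast_nonneg _))
    have ht2' : (2 : ℝ) ≤ t := by exact_mod_cast ht2
    have h1 := mul_le_mul_of_nonneg_right hrs (show (0 : ℝ) ≤ t by linarith)
    have h2 := mul_le_mul ht2' hs (by norm_num) (by linarith)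
    linarith
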